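/- Let X = {0,1}^ℕ with the shift T, W = {w_i}_{i∈I} a countable set of finite words, a = (a_i)_{i∈I} non-negative numbers with M(a,W) ≠ ∅, and for each n let W_n = {w ∈ W : |w| ≤ n}. Then the maximal measure-theoretic entropy over M(a,W_n) converges, as n → ∞, to the maximal measure-theoretic entropy over M(a,W): lim_{n→∞} max{ h_μ : μ ∈ M(a,W_n) } = max{ h_μ : μ ∈ M(a,W) }. -/

import Mathlib

open MeasureTheory Filter Topology Set
open scoped ENNReal NNReal

/-!  General definitions: Bowen topological entropy (via covers by Bowen balls),
measure-theoretic (Kolmogorov–Sinai) entropy, generic points, saturated systems,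
and the specification property. -/

variable {X : Type*}

/-- The Bowen ball of center `x`, order `n`, radius `ε` (for the metric
`d_n(x,y) = max_{0 ≤ j < n} d(T^j x, T^j y)`). -/
def bowenBall [PseudoMetricSpace X] (T : X → X) (x : X) (n : ℕ) (ε : ℝ) : Set X :=
  {y | ∀ j < n, dist (T^[j] x) (T^[j] y) < ε}

/-- `H_n^s(Z,ε)`: infimum of `Σ_i exp(-s n_i)` over countable covers of `Z` by Bowen balls
`B_{n_i}(x_i,ε)` with all `n_i ≥ n`. -/
noncomputable def bowenH [PseudoMetricSpace X] (T : X → X) (Z : Set X) (s ε : ℝ) (n : ℕ) :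
    ℝ≥0∞ :=
  ⨅ (C : Set (X × ℕ)) (_ : C.Countable) (_ : ∀ p ∈ C, n ≤ p.2)
    (_ : Z ⊆ ⋃ p ∈ C, bowenBall T p.1 p.2 ε),
    ∑' p : C, ENNReal.ofReal (Real.exp (-s * ((p : X × ℕ).2 : ℝ)))

/-- `h_top(Z,ε)`: the critical exponent of `s ↦ H^s(Z,ε) = sup_n H_n^s(Z,ε)`. -/
noncomputable def bowenEntropyRes [PseudoMetricSpace X] (T : X → X) (Z : Set X) (ε : ℝ) :
    ℝ≥0∞ :=
  sInf ((fun s : ℝ≥0 => (s : ℝ≥0∞)) '' {s : ℝ≥0 | (⨆ n, bowenH T Z (s : ℝ) ε n) = 0})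

/-- Bowen topological entropy of a subset `Z`: `h_top(Z) = lim_{ε → 0} h_top(Z,ε)`
(the limit being a supremum by monotonicity in `ε`). -/
noncomputable def bowenEntropy [PseudoMetricSpace X] (T : X → X) (Z : Set X) : ℝ≥0∞ :=
  ⨆ (ε : ℝ) (_ : 0 < ε), bowenEntropyRes T Z ε

/-- Entropy of the partition `P ∨ T⁻¹P ∨ ⋯ ∨ T⁻⁽ⁿ⁻¹⁾P`, where a countable partition is
encoded as a function `P : X → ℕ`: it is the Shannon entropy of the map
`x ↦ (P x, P (T x), …, P (Tⁿ⁻¹ x))`. -/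
noncomputable def partInfo [MeasurableSpace X] (T : X → X) (μ : Measure X) (P : X → ℕ)
    (n : ℕ) : ℝ≥0∞ :=
  ∑' l : List ℕ, ENNReal.ofReal (Real.negMulLog
    ((μ ((fun x => (List.range n).map fun j => P (T^[j] x)) ⁻¹' {l})).toReal))

/-- Measure-theoretic (Kolmogorov–Sinai) entropy `h_μ(T)`: supremum over finite measurable
partitions `P` of `lim_n (1/n) H_μ(P ∨ T⁻¹P ∨ ⋯ ∨ T⁻⁽ⁿ⁻¹⁾P)` (the limit exists by
subadditivity, so it may be written as a `liminf`). -/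
noncomputable def ksEntropy [MeasurableSpace X] (T : X → X) (μ : Measure X) : ℝ≥0∞ :=
  ⨆ (P : X → ℕ) (_ : Measurable P) (_ : (Set.range P).Finite),
    Filter.atTop.liminf fun n : ℕ => partInfo T μ P n / (n : ℝ≥0∞)

/-- `x` is a generic point for `μ` : the empirical measures `(1/n) Σ_{j<n} δ_{T^j x}`
converge to `μ` in the weak-star topology, i.e. Birkhoff averages of every continuous
function converge to its integral. -/
def IsGeneric [TopologicalSpace X] [MeasurableSpace X] (T : X → X) (μ : Measure X)
    (x : X) : Prop :=
  ∀ f : C(X, ℝ), Tendsto (fun n : ℕ => (∑ j ∈ Finset.range n, f (T^[j] x)) / (n : ℝ))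
    atTop (𝓝 (∫ y, f y ∂μ))

/-- `μ ∈ V(x)` : `μ` is a weak-star limit point of the empirical measures of `x`. -/
def IsLimitMeasure [TopologicalSpace X] [MeasurableSpace X] (T : X → X) (x : X)
    (μ : Measure X) : Prop :=
  ∃ φ : ℕ → ℕ, StrictMono φ ∧ ∀ f : C(X, ℝ),
    Tendsto (fun m : ℕ => (∑ j ∈ Finset.range (φ m), f (T^[j] x)) / (φ m : ℝ))
      atTop (𝓝 (∫ y, f y ∂μ))

/-- A system is saturated if `h_top(G_μ) = h_μ` for every invariant Borel probability
measure `μ`. -/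
def Saturated [PseudoMetricSpace X] [MeasurableSpace X] (T : X → X) : Prop :=
  ∀ μ : Measure X, IsProbabilityMeasure μ → MeasurePreserving T μ μ →
    bowenEntropy T {x | IsGeneric T μ x} = ksEntropy T μ

/-- The specification property. -/
def SpecificationProperty [PseudoMetricSpace X] (T : X → X) : Prop :=
  ∀ ε : ℝ, 0 < ε → ∃ m : ℕ, 1 ≤ m ∧
    ∀ k : ℕ, 2 ≤ k → ∀ x : ℕ → X, ∀ a b : ℕ → ℕ,
      (∀ i < k, a i ≤ b i) →
      (∀ i, i + 1 < k → b i + m ≤ a (i + 1)) →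
      ∃ y : X, ∀ i < k, ∀ n ≤ b i - a i,
        dist (T^[a i + n] y) (T^[n] (x i)) < ε

/-! Symbolic dynamics on `X = {0,1}^ℕ`. -/

/-- The metric `d(x,y) = (1/2)^(first difference)` on the symbolic space `{0,1}^ℕ`. -/
noncomputable instance : MetricSpace (ℕ → Bool) := PiNat.metricSpace

/-- The shift map on `{0,1}^ℕ`. -/
def shift : (ℕ → Bool) → ℕ → Bool := fun x n => x (n + 1)

/-- The cylinder `[w]` of all sequences beginning with the finite word `w`. -/
def cyl (w : List Bool) : Set (ℕ → Bool) :=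
  {x | ∀ i : Fin w.length, x i.1 = w.get i}

/-- `R(x,[w]) = r` : the frequency of visits of the orbit of `x` to the cylinder `[w]`
exists and equals `r`. -/
def hasFreq (w : List Bool) (x : ℕ → Bool) (r : ℝ) : Prop :=
  Filter.Tendsto (fun n : ℕ =>
      (∑ j ∈ Finset.range n, (cyl w).indicator (fun _ => (1 : ℝ)) (shift^[j] x)) / (n : ℝ))
    Filter.atTop (nhds r)

/-- The Shannon entropy of the distribution of a finite-valued map `f` under `μ`. -/
noncomputable def shannonEntropy {Ω ι : Type*} [MeasurableSpace Ω] [Fintype ι] (μ : Measure Ω)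
    (f : Ω → ι) : ℝ :=
  ∑ i, Real.negMulLog (μ.real (f ⁻¹' {i}))

lemma integral_comp_eq_sum {Ω ι : Type*} [MeasurableSpace Ω] [Fintype ι] [MeasurableSpace ι]
    [MeasurableSingletonClass ι] {μ : Measure Ω} [IsFiniteMeasure μ] {f : Ω → ι}
    (hf : Measurable f) (g : ι → ℝ) :
    ∫ x, g (f x) ∂μ = ∑ i, μ.real (f ⁻¹' {i}) * g i := by
  rw [← integral_map hf.aemeasurable (StronglyMeasurable.of_discrete).aestronglyMeasurable,
    integral_fintype Integrable.of_finite]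
  refine Finset.sum_congr rfl fun i _ => ?_
  rw [map_measureReal_apply hf (measurableSet_singleton i), smul_eq_mul]

lemma sum_measureReal_fiber {Ω ι : Type*} [MeasurableSpace Ω] [Fintype ι] [MeasurableSpace ι]
    [MeasurableSingletonClass ι] {μ : Measure Ω} [IsProbabilityMeasure μ] {f : Ω → ι}
    (hf : Measurable f) : ∑ i, μ.real (f ⁻¹' {i}) = 1 := by
  simpa using (integral_comp_eq_sum (μ := μ) hf fun _ => (1 : ℝ)).symm

lemma integrable_comp_of_finite {Ω ι : Type*} [MeasurableSpace Ω] [Finite ι] [MeasurableSpace ι]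
    [MeasurableSingletonClass ι] {μ : Measure Ω} [IsFiniteMeasure μ] {f : Ω → ι}
    (hf : Measurable f) (g : ι → ℝ) : Integrable (fun x => g (f x)) μ :=
  (Integrable.of_finite (f := g)).comp_measurable hf

lemma ae_measureReal_fiber_pos {Ω ι : Type*} [MeasurableSpace Ω] [Finite ι] (μ : Measure Ω)
    [IsFiniteMeasure μ] (f : Ω → ι) : ∀ᵐ x ∂μ, 0 < μ.real (f ⁻¹' {f x}) := by
  have h : ∀ i, ∀ᵐ x ∂μ, f x = i → 0 < μ.real (f ⁻¹' {i}) := by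
    intro i
    by_cases hi : μ (f ⁻¹' {i}) = 0
    · filter_upwards [measure_eq_zero_iff_ae_notMem.mp hi] with x hx hxi
      exact absurd hxi hx
    · exact Eventually.of_forall fun x _ => ENNReal.toReal_pos hi (measure_ne_top _ _)
  filter_upwards [ae_all_iff.mpr h] with x hx
  exact hx _ rfl

/-- **Gibbs' inequality**. -/
lemma shannonEntropy_le_integral_neg_log {Ω ι : Type*} [MeasurableSpace Ω] [Fintype ι]
    [MeasurableSpace ι] [MeasurableSingletonClass ι] {μ : Measure Ω} [IsProbabilityMeasure μ]
    {f : Ω → ι} (hf : Measurable f) {q : ι → ℝ} (hq0 : ∀ i, 0 ≤ q i) (hq : ∑ i, q i ≤ 1)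
    (hpos : ∀ᵐ x ∂μ, 0 < q (f x)) :
    shannonEntropy μ f ≤ ∫ x, -Real.log (q (f x)) ∂μ := by
  rw [integral_comp_eq_sum hf fun i => -Real.log (q i)]
  have key : ∀ i, Real.negMulLog (μ.real (f ⁻¹' {i})) ≤
      μ.real (f ⁻¹' {i}) * -Real.log (q i) + (q i - μ.real (f ⁻¹' {i})) := by
    intro i
    rcases (measureReal_nonneg (μ := μ) (s := f ⁻¹' {i})).eq_or_lt with h0 | h0
    · simp [← h0, hq0 i]
    · have hqi : 0 < q i := by
        by_contra hqi
        have : μ (f ⁻¹' {i}) = 0 := by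
          refine measure_eq_zero_iff_ae_notMem.mpr ?_
          filter_upwards [hpos] with x hx hxi
          exact hqi (by simpa [show f x = i from hxi] using hx)
        simp [Measure.real, this] at h0
      have hlog := Real.log_le_sub_one_of_pos (div_pos hqi h0)
      rw [Real.log_div hqi.ne' h0.ne'] at hlog
      have := mul_le_mul_of_nonneg_left hlog h0.le
      have h2 : μ.real (f ⁻¹' {i}) * (q i / μ.real (f ⁻¹' {i}) - 1) =
        q i - μ.real (f ⁻¹' {i}) := by field_simp
      rw [Real.negMulLog]
      linarith
  have := Finset.sum_le_sum fun i (_ : i ∈ Finset.univ) => key i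
  rw [Finset.sum_add_distrib, Finset.sum_sub_distrib, sum_measureReal_fiber hf] at this
  unfold shannonEntropy
  linarith

lemma Real.negMulLog_sum_le {ι : Type*} (s : Finset ι) {p : ι → ℝ} (hp : ∀ i, 0 ≤ p i) :
    Real.negMulLog (∑ i ∈ s, p i) ≤ ∑ i ∈ s, Real.negMulLog (p i) := by
  rw [Real.negMulLog, neg_mul, Finset.sum_mul, ← Finset.sum_neg_distrib]
  refine Finset.sum_le_sum fun i hi => ?_
  rw [Real.negMulLog, neg_mul, neg_le_neg_iff]
  rcases (hp i).eq_or_lt with h | h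
  · simp [← h]
  · exact mul_le_mul_of_nonneg_left
      (Real.log_le_log h (Finset.single_le_sum (fun j _ => hp j) hi)) h.le

lemma shannonEntropy_comp_le {Ω ι κ : Type*} [MeasurableSpace Ω] [Fintype ι] [Fintype κ]
    [MeasurableSpace ι] [MeasurableSingletonClass ι] {μ : Measure Ω} [IsFiniteMeasure μ]
    {f : Ω → ι} (hf : Measurable f) (g : ι → κ) :
    shannonEntropy μ (fun x => g (f x)) ≤ shannonEntropy μ f := by
  classical
  have h : ∀ j, μ.real ((fun x => g (f x)) ⁻¹' {j}) =
      ∑ i with g i = j, μ.real (f ⁻¹' {i}) := by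
    intro j
    rw [← measureReal_biUnion_finset]
    · congr 1
      ext x
      simp
    · intro a _ b _ hab
      exact Disjoint.preimage f (by simpa using hab)
    · exact fun i _ => hf (measurableSet_singleton i)
  unfold shannonEntropy
  rw [← Finset.sum_fiberwise Finset.univ g]
  refine Finset.sum_le_sum fun j _ => ?_
  rw [h]
  exact Real.negMulLog_sum_le _ fun i => measureReal_nonneg

lemma partInfo_comp_injective {Ω ι : Type*} [MeasurableSpace Ω] [Fintype ι] (T : Ω → Ω)
    (μ : Measure Ω) [IsProbabilityMeasure μ] {e : ι → ℕ} (he : Function.Injective e) (Q : Ω → ι)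
    (n : ℕ) :
    partInfo T μ (fun x => e (Q x)) n =
      ENNReal.ofReal (shannonEntropy μ fun x (j : Fin n) => Q (T^[j] x)) := by
  classical
  let g : (Fin n → ι) → List ℕ := fun c => List.ofFn fun j => e (c j)
  have hg : Function.Injective g := fun c d h =>
    funext fun j => he (congrFun (List.ofFn_injective h) j)
  have hmap : (fun x => (List.range n).map fun j => e (Q (T^[j] x))) =
      fun x => g fun j : Fin n => Q (T^[j] x) := by
    funext x
    refine List.ext_getElem (by simp [g]) fun i h1 h2 => ?_
    simp [g]
  unfold partInfo
  rw [hmap, shannonEntropy, ENNReal.ofReal_sum_of_nonneg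
    fun i _ => Real.negMulLog_nonneg measureReal_nonneg measureReal_le_one, ← hg.tsum_eq,
    tsum_fintype]
  · refine Finset.sum_congr rfl fun c _ => ?_
    congr 4
    ext x
    simp [hg.eq_iff]
  · intro l hl
    by_contra hlg
    refine hl ?_
    have : (fun x => g fun j : Fin n => Q (T^[j] x)) ⁻¹' {l} = ∅ := by
      ext x
      simp only [Set.mem_preimage, Set.mem_singleton_iff, Set.mem_empty_iff_false, iff_false]
      exact fun h => hlg ⟨_, h⟩
    simp [this]

lemma shift_iterate_apply (j : ℕ) (x : ℕ → Bool) (n : ℕ) : (shift^[j] x) n = x (n + j) := by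
  induction j generalizing x with
  | zero => rfl
  | succ j ih => rw [Function.iterate_succ_apply, ih, shift]; congr 1

lemma continuous_shift : Continuous shift :=
  continuous_pi fun n => continuous_apply (n + 1)

/-- The word formed by the first `k` symbols of `x`. -/
def prefixWord (k : ℕ) (x : ℕ → Bool) : Fin k → Bool := fun t => x t

lemma continuous_prefixWord (k : ℕ) : Continuous (prefixWord k) :=
  continuous_pi fun t => continuous_apply (t : ℕ)

lemma measurable_prefixWord (k : ℕ) : Measurable (prefixWord k) :=
  measurable_pi_lambda _ fun t => measurable_pi_apply (t : ℕ)

/-- The transition probabilities used for coding a symbol `v` known to be close to `u`. -/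
noncomputable def fanoKernel {N : ℕ} (ε : ℝ) (u v : Fin N) : ℝ :=
  if v = u then 1 - ε else ε / N

lemma fanoKernel_pos {N : ℕ} {ε : ℝ} (hε0 : 0 < ε) (hε1 : ε < 1) (u v : Fin N) :
    0 < fanoKernel ε u v := by
  have : 0 < (N : ℝ) := by exact_mod_cast u.pos
  unfold fanoKernel
  split_ifs
  · linarith
  · positivity

lemma sum_fanoKernel_le {N : ℕ} {ε : ℝ} (hε0 : 0 < ε) (u : Fin N) :
    ∑ v, fanoKernel ε u v ≤ 1 := by
  have hN : 0 < (N : ℝ) := by exact_mod_cast u.pos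
  calc ∑ v, fanoKernel ε u v ≤ ∑ v, ((if v = u then 1 - ε else 0) + ε / N) := by
        refine Finset.sum_le_sum fun v _ => ?_
        unfold fanoKernel
        split_ifs
        · exact le_add_of_nonneg_right (by positivity)
        · simp
    _ = 1 := by
        simp [Finset.sum_add_distrib]
        field_simp
        ring

lemma neg_log_fanoKernel_le {N : ℕ} {ε : ℝ} (hε0 : 0 < ε) (hε1 : ε < 1) (u v : Fin N) :
    -Real.log (fanoKernel ε u v) ≤
      -Real.log (1 - ε) + if v = u then 0 else -Real.log (ε / N) := by
  have : Real.log (1 - ε) ≤ 0 := Real.log_nonpos (by linarith) (by linarith)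
  unfold fanoKernel
  split_ifs
  · simp
  · linarith

lemma sum_prod_mul_prod_le_one {α β : Type*} [Fintype α] [Fintype β] {r n : ℕ} {p : α → ℝ}
    (hp0 : ∀ c, 0 ≤ p c) (hp : ∑ c, p c = 1) {K : Fin n → (Fin r → α) → β → ℝ}
    (hK0 : ∀ j c l, 0 ≤ K j c l) (hK : ∀ j c, ∑ l, K j c l ≤ 1) :
    ∑ z : (Fin r → α) × (Fin n → β), (∏ i, p (z.1 i)) * ∏ j, K j z.1 (z.2 j) ≤ 1 := by
  classical
  rw [Fintype.sum_prod_type]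
  calc ∑ c : Fin r → α, ∑ l : Fin n → β, (∏ i, p (c i)) * ∏ j, K j c (l j)
      = ∑ c : Fin r → α, (∏ i, p (c i)) * ∏ j, ∑ l, K j c l := by
        refine Finset.sum_congr rfl fun c _ => ?_
        rw [Finset.prod_univ_sum, Fintype.piFinset_univ, Finset.mul_sum]
    _ ≤ ∑ c : Fin r → α, ∏ i, p (c i) := by
        refine Finset.sum_le_sum fun c _ => mul_le_of_le_one_right
          (Finset.prod_nonneg fun i _ => hp0 _) ?_
        exact Finset.prod_le_one (fun j _ => Finset.sum_nonneg fun l _ => hK0 j c l)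
          fun j _ => hK j c
    _ = 1 := by
        have := (Finset.prod_univ_sum (fun _ : Fin r => (Finset.univ : Finset α))
          fun _ c => p c).symm
        rw [Fintype.piFinset_univ] at this
        rw [this]
        simp [hp]

lemma MeasureTheory.MeasurePreserving.integral_comp_iterate {Ω : Type*} [MeasurableSpace Ω]
    {μ : Measure Ω} {T : Ω → Ω} (hT : MeasurePreserving T μ μ) {g : Ω → ℝ} (hg : Measurable g)
    (j : ℕ) : ∫ x, g (T^[j] x) ∂μ = ∫ x, g x ∂μ := by
  have h := hT.iterate j
  conv_rhs => rw [← h.map_eq]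
  exact (integral_map h.measurable.aemeasurable hg.aestronglyMeasurable).symm

/-- The entropy of the itineraries of length `n` of a finite partition `Q` is controlled by the
entropy of words of length `k`, with an error depending on how well `Q` is approximated by a
function of the first `m` symbols. -/
lemma shannonEntropy_itinerary_le {μ : Measure (ℕ → Bool)} [IsProbabilityMeasure μ]
    (hμ : MeasurePreserving shift μ μ) {N : ℕ} {Q : (ℕ → Bool) → Fin N} (hQ : Measurable Q)
    {m : ℕ} (f : (Fin m → Bool) → Fin N) {ε : ℝ} (hε0 : 0 < ε) (hε1 : ε < 1) {k r n : ℕ}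
    (hk : 0 < k) (h : n + m ≤ r * k) :
    shannonEntropy μ (fun x (j : Fin n) => Q (shift^[j] x)) ≤
      r * shannonEntropy μ (prefixWord k) +
        n * (-Real.log (1 - ε) + μ.real {x | Q x ≠ f (prefixWord m x)} * -Real.log (ε / N)) := by
  classical
  have hS : Measurable shift := hμ.measurable
  let p : (Fin k → Bool) → ℝ := fun c => μ.real (prefixWord k ⁻¹' {c})
  let read : Fin n → (Fin r → Fin k → Bool) → Fin m → Bool := fun j c t =>
    c ⟨(t + j) / k, Nat.div_lt_of_lt_mul (by have := j.2; have := t.2; nlinarith)⟩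
      ⟨(t + j) % k, Nat.mod_lt _ hk⟩
  let Z : (ℕ → Bool) → (Fin r → Fin k → Bool) × (Fin n → Fin N) := fun x =>
    (fun i => prefixWord k (shift^[i * k] x), fun j => Q (shift^[j] x))
  let q : (Fin r → Fin k → Bool) × (Fin n → Fin N) → ℝ := fun z =>
    (∏ i, p (z.1 i)) * ∏ j, fanoKernel ε (f (read j z.1)) (z.2 j)
  have hread : ∀ x j, read j (Z x).1 = prefixWord m (shift^[j] x) := by
    intro x j
    funext t
    simp only [read, Z, prefixWord, shift_iterate_apply]
    rw [mul_comm, Nat.mod_add_div]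
  have hblock : ∀ i : ℕ, Measurable fun x => prefixWord k (shift^[i] x) := fun i =>
    (measurable_prefixWord k).comp (hS.iterate i)
  have hZ : Measurable Z := Measurable.prodMk
    (measurable_pi_lambda _ fun i => hblock _)
    (measurable_pi_lambda _ fun j => hQ.comp (hS.iterate j))
  have hppos : ∀ᵐ x ∂μ, ∀ i : Fin r, 0 < p (prefixWord k (shift^[i * k] x)) := by
    refine ae_all_iff.mpr fun i => ?_
    exact (hμ.iterate (i * k)).quasiMeasurePreserving.ae
      (ae_measureReal_fiber_pos μ (prefixWord k))
  have hKpos := fun j c l => fanoKernel_pos hε0 hε1 (f (read j c)) l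
  have hgibbs := shannonEntropy_le_integral_neg_log (μ := μ) hZ (q := q)
    (fun z => mul_nonneg (Finset.prod_nonneg fun i _ => measureReal_nonneg)
      (Finset.prod_nonneg fun j _ => (hKpos _ _ _).le))
    (sum_prod_mul_prod_le_one (fun _ => measureReal_nonneg)
      (sum_measureReal_fiber (measurable_prefixWord k))
      (K := fun j c l => fanoKernel ε (f (read j c)) l)
      (fun j c l => (hKpos j c l).le) (fun j c => sum_fanoKernel_le hε0 _))
    (by
      filter_upwards [hppos] with x hx
      exact mul_pos (Finset.prod_pos fun i _ => hx i) (Finset.prod_pos fun j _ => hKpos _ _ _))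
  let g : (ℕ → Bool) → ℝ := fun x => -Real.log (fanoKernel ε (f (prefixWord m x)) (Q x))
  let pair : (ℕ → Bool) → (Fin m → Bool) × Fin N := fun x => (prefixWord m x, Q x)
  have hpair : Measurable pair := (measurable_prefixWord m).prodMk hQ
  have hg : Measurable g :=
    (Measurable.of_discrete (f := fun z : (Fin m → Bool) × Fin N =>
      -Real.log (fanoKernel ε (f z.1) z.2))).comp hpair
  have hgint : ∀ j : ℕ, Integrable (fun x => g (shift^[j] x)) μ := fun j =>
    integrable_comp_of_finite (hpair.comp (hS.iterate j)) fun z : (Fin m → Bool) × Fin N =>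
      -Real.log (fanoKernel ε (f z.1) z.2)
  have hpint : ∀ i : ℕ, Integrable (fun x => -Real.log (p (prefixWord k (shift^[i] x)))) μ :=
    fun i => integrable_comp_of_finite (hblock i) fun c => -Real.log (p c)
  have hlog : (fun x => -Real.log (q (Z x))) =ᵐ[μ] fun x =>
      (∑ i : Fin r, -Real.log (p (prefixWord k (shift^[i * k] x)))) +
        ∑ j : Fin n, g (shift^[j] x) := by
    filter_upwards [hppos] with x hx
    simp only [q]
    rw [Real.log_mul (Finset.prod_pos fun i _ => hx i).ne'
      (Finset.prod_pos fun j _ => hKpos _ _ _).ne', Real.log_prod fun i _ => (hx i).ne',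
      Real.log_prod fun j _ => (hKpos _ _ _).ne', neg_add, Finset.sum_neg_distrib,
      ← Finset.sum_neg_distrib (s := (Finset.univ : Finset (Fin n)))]
    simp only [hread]
    rfl
  have hpval : ∀ i : ℕ, ∫ x, -Real.log (p (prefixWord k (shift^[i] x))) ∂μ =
      shannonEntropy μ (prefixWord k) := by
    intro i
    rw [hμ.integral_comp_iterate (g := fun x => -Real.log (p (prefixWord k x)))
      ((Measurable.of_discrete (f := fun c => -Real.log (p c))).comp (measurable_prefixWord k)) i,
      integral_comp_eq_sum (measurable_prefixWord k) fun c => -Real.log (p c), shannonEntropy]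
    refine Finset.sum_congr rfl fun c _ => ?_
    simp only [p, Real.negMulLog]
    ring
  have hbad : MeasurableSet {x | Q x ≠ f (prefixWord m x)} :=
    hpair (MeasurableSet.of_discrete (s := {z : (Fin m → Bool) × Fin N | z.2 ≠ f z.1}))
  have hgval : ∫ x, g x ∂μ ≤
      -Real.log (1 - ε) + μ.real {x | Q x ≠ f (prefixWord m x)} * -Real.log (ε / N) := by
    have hint : Integrable ({x | Q x ≠ f (prefixWord m x)}.indicator
        fun _ => -Real.log (ε / N)) μ := (integrable_const _).indicator hbad
    calc ∫ x, g x ∂μ ≤ ∫ x, (-Real.log (1 - ε) +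
          {x | Q x ≠ f (prefixWord m x)}.indicator (fun _ => -Real.log (ε / N)) x) ∂μ := by
          refine integral_mono (hgint 0) ((integrable_const _).add hint) fun x => ?_
          refine (neg_log_fanoKernel_le hε0 hε1 _ _).trans (le_of_eq ?_)
          simp only [Set.indicator, Set.mem_ofPred_eq, ite_not]
      _ = _ := by
          rw [integral_add (integrable_const _) hint, integral_indicator_const _ hbad]
          simp
  have hmono := shannonEntropy_comp_le (μ := μ) hZ Prod.snd
  refine hmono.trans (hgibbs.trans ?_)
  rw [integral_congr_ae hlog, integral_add
    (integrable_finsetSum _ fun i _ => hpint _) (integrable_finsetSum _ fun j _ => hgint _),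
    integral_finsetSum _ fun i _ => hpint _, integral_finsetSum _ fun j _ => hgint _]
  simp only [hpval, hμ.integral_comp_iterate hg]
  simp only [Finset.sum_const, Finset.card_univ, Fintype.card_fin, nsmul_eq_mul]
  gcongr

/-- A finite measurable partition is approximated in measure by functions of finitely many
symbols. -/
lemma exists_measureReal_ne_prefixWord_lt (μ : Measure (ℕ → Bool)) [IsProbabilityMeasure μ]
    {N : ℕ} {Q : (ℕ → Bool) → Fin N} (hQ : Measurable Q) {η : ℝ} (hη : 0 < η) :
    ∃ (m : ℕ) (f : (Fin m → Bool) → Fin N), μ.real {x | Q x ≠ f (prefixWord m x)} < η := by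
  classical
  have u₀ : Fin N := Q fun _ => false
  have hN : 0 < (N : ℝ) := by exact_mod_cast u₀.pos
  have happrox : ∀ u : Fin N, ∃ t ∈ measurableCylinders fun _ : ℕ => Bool,
      μ (symmDiff t (Q ⁻¹' {u})) < ENNReal.ofReal (η / N) := fun u =>
    exists_measure_symmDiff_lt_of_generateFrom_isSetRing isSetRing_measurableCylinders
      ⟨{Set.univ}, Set.countable_singleton _,
        Set.singleton_subset_iff.mpr (univ_mem_measurableCylinders _), by simp⟩
      generateFrom_measurableCylinders.symm (hQ (measurableSet_singleton u))
      (ENNReal.ofReal_pos.mpr (by positivity))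
  choose t ht hμt using happrox
  choose s S _ hts using fun u => (mem_measurableCylinders (t u)).mp (ht u)
  let m : ℕ := (Finset.univ.sup fun u => (s u).sup id) + 1
  have hm : ∀ u, ∀ i ∈ s u, i < m := fun u i hi =>
    Nat.lt_succ_of_le ((Finset.le_sup (f := id) hi).trans
      (Finset.le_sup (f := fun u => (s u).sup id) (Finset.mem_univ u)))
  let ext : (Fin m → Bool) → ℕ → Bool := fun c i => if h : i < m then c ⟨i, h⟩ else false
  have hext : ∀ u x, ext (prefixWord m x) ∈ t u ↔ x ∈ t u := by
    intro u x
    rw [hts u, mem_cylinder, mem_cylinder]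
    have : (s u).restrict (ext (prefixWord m x)) = (s u).restrict x := by
      funext i
      simp [ext, hm u i i.2, prefixWord]
    rw [this]
  let f : (Fin m → Bool) → Fin N := fun c =>
    if h : ∃ u, ext c ∈ t u then h.choose else u₀
  refine ⟨m, f, ?_⟩
  have hsub : {x | Q x ≠ f (prefixWord m x)} ⊆
      ⋃ u ∈ (Finset.univ : Finset (Fin N)), symmDiff (t u) (Q ⁻¹' {u}) := by
    intro x hx
    by_contra hcon
    have hiff : ∀ u, x ∈ t u ↔ Q x = u := by
      intro u
      by_contra hu
      refine hcon (Set.mem_biUnion (Finset.mem_univ u) ?_)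
      simp only [Set.mem_symmDiff, Set.mem_preimage, Set.mem_singleton_iff]
      tauto
    have hex : ∃ u, ext (prefixWord m x) ∈ t u := ⟨Q x, (hext _ x).mpr ((hiff _).mpr rfl)⟩
    refine hx ?_
    simp only [f, dif_pos hex]
    exact (hiff _).mp ((hext _ x).mp hex.choose_spec)
  calc μ.real {x | Q x ≠ f (prefixWord m x)}
      ≤ μ.real (⋃ u ∈ (Finset.univ : Finset (Fin N)), symmDiff (t u) (Q ⁻¹' {u})) :=
        measureReal_mono hsub (measure_ne_top _ _)
    _ ≤ ∑ u, μ.real (symmDiff (t u) (Q ⁻¹' {u})) := measureReal_biUnion_finset_le _ _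
    _ < ∑ _u : Fin N, η / N := by
        refine Finset.sum_lt_sum_of_nonempty ⟨u₀, Finset.mem_univ _⟩ fun u _ => ?_
        exact (ENNReal.lt_ofReal_iff_toReal_lt (measure_ne_top _ _)).mp (hμt u)
    _ = η := by
        simp
        field_simp

lemma shannonEntropy_nonneg {Ω ι : Type*} [MeasurableSpace Ω] [Fintype ι] (μ : Measure Ω)
    [IsProbabilityMeasure μ] (f : Ω → ι) : 0 ≤ shannonEntropy μ f :=
  Finset.sum_nonneg fun _ _ => Real.negMulLog_nonneg measureReal_nonneg measureReal_le_one

lemma eventually_shannonEntropy_itinerary_le {μ : Measure (ℕ → Bool)} [IsProbabilityMeasure μ]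
    (hμ : MeasurePreserving shift μ μ) {N : ℕ} {Q : (ℕ → Bool) → Fin N} (hQ : Measurable Q)
    {k : ℕ} (hk : 0 < k) {η : ℝ} (hη : 0 < η) :
    ∀ᶠ n : ℕ in atTop, shannonEntropy μ (fun x (j : Fin n) => Q (shift^[j] x)) / n ≤
      shannonEntropy μ (prefixWord k) / k + η := by
  set H := shannonEntropy μ (prefixWord k) with hH
  have hH0 : 0 ≤ H := shannonEntropy_nonneg _ _
  obtain ⟨ε, hε0, hε1, hε⟩ : ∃ ε : ℝ, 0 < ε ∧ ε < 1 ∧ -Real.log (1 - ε) < η / 3 := by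
    refine ⟨1 - Real.exp (-(η / 4)), ?_, ?_, ?_⟩
    · have := Real.exp_lt_one_iff.2 (show -(η / 4) < 0 by linarith)
      linarith
    · linarith [Real.exp_pos (-(η / 4))]
    · rw [sub_sub_cancel, Real.log_exp]
      linarith
  have hN : 1 ≤ (N : ℝ) := by exact_mod_cast (Q fun _ => false).pos
  have hL : 0 ≤ -Real.log (ε / N) := by
    rw [neg_nonneg]
    refine Real.log_nonpos (by positivity) ?_
    rw [div_le_one (by positivity)]
    linarith
  set L := -Real.log (ε / N)
  obtain ⟨m, f, hf⟩ := exists_measureReal_ne_prefixWord_lt μ hQ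
    (η := η / (3 * (L + 1))) (by positivity)
  have hk' : 0 < (k : ℝ) := by exact_mod_cast hk
  have hlim : Tendsto (fun n : ℕ => H * (m / k + 1) / (n : ℝ)) atTop (𝓝 0) :=
    tendsto_const_div_atTop_nhds_zero_nat _
  filter_upwards [hlim.eventually_lt_const (show 0 < η / 3 by positivity),
    eventually_gt_atTop 0] with n hn hn0
  have hn0' : 0 < (n : ℝ) := by exact_mod_cast hn0
  have hmain := shannonEntropy_itinerary_le hμ hQ f hε0 hε1 (r := (n + m) / k + 1) (n := n) hk
    (by rw [mul_comm]; exact (Nat.lt_mul_div_succ _ hk).le)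
  have hr : (((n + m) / k + 1 : ℕ) : ℝ) ≤ (n + m) / k + 1 := by
    push_cast
    gcongr
    exact_mod_cast Nat.cast_div_le (α := ℝ) (m := n + m) (n := k)
  have hδ : μ.real {x | Q x ≠ f (prefixWord m x)} * L ≤ η / 3 := by
    calc _ ≤ η / (3 * (L + 1)) * (L + 1) := by
          gcongr
          linarith
      _ = η / 3 := by field_simp
  have hsplit : ((n + m) / k + 1 : ℝ) * H = n * (H / k + H * (m / k + 1) / n) := by
    field_simp
    ring
  rw [div_le_iff₀ hn0']
  calc _ ≤ ((n + m) / k + 1 : ℝ) * H + n * (η / 3 + η / 3) := by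
        refine hmain.trans ?_
        gcongr
    _ ≤ n * (H / k + η / 3) + n * (η / 3 + η / 3) := by
        rw [hsplit]
        gcongr
    _ = (H / k + η) * n := by ring

/-- The entropy of a shift-invariant measure is bounded by the normalized entropy of words of
any given length. -/
lemma ksEntropy_shift_le {μ : Measure (ℕ → Bool)} [IsProbabilityMeasure μ]
    (hμ : MeasurePreserving shift μ μ) {k : ℕ} (hk : 0 < k) :
    ksEntropy shift μ ≤ ENNReal.ofReal (shannonEntropy μ (prefixWord k) / k) := by
  refine iSup_le fun P => iSup_le fun hP => iSup_le fun hfin => ?_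
  obtain ⟨B, hB⟩ := hfin.bddAbove
  have hlt : ∀ x, P x < B + 1 := fun x => Nat.lt_succ_of_le (hB ⟨x, rfl⟩)
  let Q : (ℕ → Bool) → Fin (B + 1) := fun x => ⟨P x, hlt x⟩
  have hQ : Measurable Q := measurable_to_countable' fun u => by
    convert hP (measurableSet_singleton (u : ℕ)) using 1
    ext x
    simp [Q, Fin.ext_iff]
  have hbound : ∀ η : ℝ, 0 < η →
      (atTop.liminf fun n : ℕ => partInfo shift μ P n / (n : ℝ≥0∞)) ≤
        ENNReal.ofReal (shannonEntropy μ (prefixWord k) / k + η) := by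
    intro η hη
    refine liminf_le_of_frequently_le' (Eventually.frequently ?_)
    filter_upwards [eventually_shannonEntropy_itinerary_le hμ hQ hk hη, eventually_gt_atTop 0]
      with n hn hn0
    rw [show P = fun x => ((Q x : Fin (B + 1)) : ℕ) from rfl,
      partInfo_comp_injective shift μ Fin.val_injective Q n, ← ENNReal.ofReal_natCast,
      ← ENNReal.ofReal_div_of_pos (by exact_mod_cast hn0)]
    exact ENNReal.ofReal_le_ofReal hn
  have hcont : Tendsto (fun η : ℝ => ENNReal.ofReal (shannonEntropy μ (prefixWord k) / k + η))
      (𝓝[>] 0) (𝓝 (ENNReal.ofReal (shannonEntropy μ (prefixWord k) / k))) := by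
    have : Continuous fun η : ℝ => ENNReal.ofReal (shannonEntropy μ (prefixWord k) / k + η) :=
      ENNReal.continuous_ofReal.comp (continuous_const.add continuous_id)
    simpa using (this.tendsto 0).mono_left nhdsWithin_le_nhds
  refine ge_of_tendsto hcont ?_
  filter_upwards [self_mem_nhdsWithin] with η hη
  exact hbound η hη

/-- A lower bound on the normalized entropies of words is a lower bound on the entropy. -/
lemma le_ksEntropy_shift {μ : Measure (ℕ → Bool)} [IsProbabilityMeasure μ] {c : ℝ≥0∞}
    (hc : ∀ k : ℕ, 0 < k → c ≤ ENNReal.ofReal (shannonEntropy μ (prefixWord k) / k)) :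
    c ≤ ksEntropy shift μ := by
  let e : Bool → ℕ := Bool.toNat
  have he : Function.Injective e := by decide
  have hP : Measurable fun x : ℕ → Bool => e (x 0) :=
    (Measurable.of_discrete (f := e)).comp (measurable_pi_apply 0)
  have hfin : (Set.range fun x : ℕ → Bool => e (x 0)).Finite :=
    (Set.finite_range e).subset (Set.range_comp_subset_range (fun x : ℕ → Bool => x 0) e)
  refine le_trans ?_ (le_iSup₂_of_le (fun x : ℕ → Bool => e (x 0)) hP (le_iSup_of_le hfin le_rfl))
  refine le_liminf_of_le (by isBoundedDefault) ?_
  filter_upwards [eventually_gt_atTop 0] with n hn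
  rw [partInfo_comp_injective shift μ he (fun x => x 0) n, ← ENNReal.ofReal_natCast,
    ← ENNReal.ofReal_div_of_pos (by exact_mod_cast hn)]
  have hword : (fun (x : ℕ → Bool) (j : Fin n) => shift^[j] x 0) = prefixWord n := by
    funext x j
    simp [prefixWord, shift_iterate_apply]
  exact hword ▸ hc n hn

lemma tendsto_measureReal_of_isClopen {Ω ι : Type*} [MeasurableSpace Ω]
    [TopologicalSpace Ω] [OpensMeasurableSpace Ω] [HasOuterApproxClosed Ω] {l : Filter ι}
    {ν : ProbabilityMeasure Ω} {νs : ι → ProbabilityMeasure Ω} (h : Tendsto νs l (𝓝 ν))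
    {E : Set Ω} (hE : IsClopen E) :
    Tendsto (fun i => (νs i : Measure Ω).real E) l (𝓝 ((ν : Measure Ω).real E)) := by
  have := ProbabilityMeasure.tendsto_measure_of_null_frontier_of_tendsto' h (E := E)
    (by simp [hE.frontier_eq])
  exact (ENNReal.tendsto_toReal (measure_ne_top _ _)).comp this

lemma tendsto_shannonEntropy_prefixWord {ι : Type*} {l : Filter ι}
    {ν : ProbabilityMeasure (ℕ → Bool)} {νs : ι → ProbabilityMeasure (ℕ → Bool)}
    (h : Tendsto νs l (𝓝 ν)) (k : ℕ) :
    Tendsto (fun i => shannonEntropy (νs i : Measure (ℕ → Bool)) (prefixWord k)) l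
      (𝓝 (shannonEntropy (ν : Measure (ℕ → Bool)) (prefixWord k))) :=
  tendsto_finsetSum _ fun c _ => (Real.continuous_negMulLog.tendsto _).comp
    (tendsto_measureReal_of_isClopen h
      ((isClopen_discrete {c}).preimage (continuous_prefixWord k)))

lemma isClopen_cyl (w : List Bool) : IsClopen (cyl w) := by
  convert (isClopen_discrete {w.get}).preimage (continuous_prefixWord w.length) using 1
  ext x
  simp [cyl, prefixWord, funext_iff]

lemma measurePreserving_shift_of_tendsto {ι : Type*} {l : Filter ι} [l.NeBot]
    {ν : ProbabilityMeasure (ℕ → Bool)} {νs : ι → ProbabilityMeasure (ℕ → Bool)}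
    (h : Tendsto νs l (𝓝 ν))
    (hs : ∀ i, MeasurePreserving shift (νs i : Measure (ℕ → Bool)) (νs i)) :
    MeasurePreserving shift (ν : Measure (ℕ → Bool)) ν := by
  refine ⟨continuous_shift.measurable, ?_⟩
  have hmap := ((ProbabilityMeasure.continuous_map continuous_shift).tendsto ν).comp h
  have heq : ∀ i, (νs i).map continuous_shift.aemeasurable = νs i := fun i =>
    Subtype.ext (hs i).map_eq
  have := tendsto_nhds_unique (hmap.congr heq) h
  exact congrArg Subtype.val this

/-- **Proposition 5.2.** The maximal entropy over `M(a,W)` is approximated by the maximal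
entropies over `M(a,W_n)`, where `W_n = {w ∈ W : |w| ≤ n}`:
`lim_n max{h_μ : μ ∈ M(a,W_n)} = max{h_μ : μ ∈ M(a,W)}`. -/
theorem approximation_of_maximal_entropy (I : Set ℕ) (w : ℕ → List Bool) (a : ℕ → ℝ)
    (ha : ∀ i ∈ I, 0 ≤ a i)
    (hne : {μ : Measure (ℕ → Bool) | IsProbabilityMeasure μ ∧
        MeasurePreserving shift μ μ ∧ ∀ i ∈ I, (μ (cyl (w i))).toReal = a i}.Nonempty) :
    Filter.Tendsto (fun n : ℕ =>
        ⨆ μ ∈ {μ : Measure (ℕ → Bool) | IsProbabilityMeasure μ ∧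
            MeasurePreserving shift μ μ ∧
            ∀ i ∈ I, (w i).length ≤ n → (μ (cyl (w i))).toReal = a i},
          ksEntropy shift μ)
      Filter.atTop
      (nhds (⨆ μ ∈ {μ : Measure (ℕ → Bool) | IsProbabilityMeasure μ ∧
          MeasurePreserving shift μ μ ∧ ∀ i ∈ I, (μ (cyl (w i))).toReal = a i},
        ksEntropy shift μ)) := by
  have hanti : Antitone fun n : ℕ => ⨆ μ ∈ {μ : Measure (ℕ → Bool) | IsProbabilityMeasure μ ∧
      MeasurePreserving shift μ μ ∧ ∀ i ∈ I, (w i).length ≤ n → (μ (cyl (w i))).toReal = a i},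
      ksEntropy shift μ := fun n n' hnn' =>
    biSup_mono fun μ hμ => ⟨hμ.1, hμ.2.1, fun i hi hin => hμ.2.2 i hi (hin.trans hnn')⟩
  convert tendsto_atTop_iInf hanti using 2
  refine le_antisymm (le_iInf fun n => biSup_mono fun μ hμ =>
    ⟨hμ.1, hμ.2.1, fun i hi _ => hμ.2.2 i hi⟩) ?_
  refine le_of_forall_lt fun b hb => ?_
  obtain ⟨c, hbc, hc⟩ := exists_between hb
  refine hbc.trans_le ?_
  have hex : ∀ n : ℕ, ∃ μ : ProbabilityMeasure (ℕ → Bool),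
      MeasurePreserving shift (μ : Measure (ℕ → Bool)) μ ∧
      (∀ i ∈ I, (w i).length ≤ n → ((μ : Measure (ℕ → Bool)) (cyl (w i))).toReal = a i) ∧
      c < ksEntropy shift (μ : Measure (ℕ → Bool)) := by
    intro n
    obtain ⟨μ, hμ, hcμ⟩ := lt_biSup_iff.mp (hc.trans_le (iInf_le _ n))
    exact ⟨⟨μ, hμ.1⟩, hμ.2.1, hμ.2.2, hcμ⟩
  choose νs hinv hcyl hent using hex
  obtain ⟨ν, -, hν⟩ := isCompact_univ.ultrafilter_le_nhds
    ((hyperfilter ℕ).map νs) (by simp)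
  have hlim : Tendsto νs (hyperfilter ℕ : Filter ℕ) (𝓝 ν) := hν
  have hle : (hyperfilter ℕ : Filter ℕ) ≤ atTop := Nat.hyperfilter_le_atTop
  refine le_iSup₂_of_le (ν : Measure (ℕ → Bool))
    ⟨ν.2, measurePreserving_shift_of_tendsto hlim hinv, fun i hi => ?_⟩ ?_
  · refine tendsto_nhds_unique_of_eventuallyEq
      (tendsto_measureReal_of_isClopen hlim (isClopen_cyl (w i)))
      tendsto_const_nhds ?_
    filter_upwards [hle (eventually_ge_atTop (w i).length)] with n hn
    exact hcyl n i hi hn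
  · refine le_ksEntropy_shift fun k hk => ?_
    refine ge_of_tendsto ((ENNReal.continuous_ofReal.tendsto _).comp
      ((tendsto_shannonEntropy_prefixWord hlim k).div_const (k : ℝ))) ?_
    exact Eventually.of_forall fun n => (hent n).le.trans (ksEntropy_shift_le (hinv n) hk)
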